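/- arXiv:2604.02195 — 10 statements merged into one kernel-verified Lean document; each statement's English description precedes it below -/
import Mathlib

section
/- Sorting stability: let N be a natural number, let a, b : Fin N → ℝ be nondecreasing functions, let σ be a permutation of Fin N, and let δ ≥ 0. If |a(i) − b(σ(i))| ≤ δ for every i, then |a(i) − b(i)| ≤ δ for every i. -/
lemma exists_ge_map_le_of_injective {ι : Type*} [LinearOrder ι] [LocallyFiniteOrderTop ι]
    {f : ι → ι} (hf : f.Injective) (i : ι) : ∃ j, i ≤ j ∧ f j ≤ i := by
  -- Otherwise `f` restricts to a self-map of the finite set `[i, ∞)` that misses `i`.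
  by_contra! hlt
  have hmaps : Set.MapsTo f (Set.Ici i) (Set.Ici i) := fun j hij ↦ (hlt j hij).le
  have hbij : Set.BijOn f (Set.Ici i) (Set.Ici i) :=
    ((Set.finite_Ici i).injOn_iff_bijOn_of_mapsTo hmaps).1 hf.injOn
  obtain ⟨j, hij, hji⟩ := hbij.surjOn Set.self_mem_Ici
  exact (hlt j hij).ne' hji

lemma le_of_le_comp_injective {ι α : Type*} [LinearOrder ι] [LocallyFiniteOrderTop ι]
    [Preorder α] {a b : ι → α} (ha : Monotone a) (hb : Monotone b)
    {f : ι → ι} (hf : f.Injective) (h : a ≤ b ∘ f) : a ≤ b := by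
  intro i
  obtain ⟨j, hij, hji⟩ := exists_ge_map_le_of_injective hf i
  calc
    a i ≤ a j := ha hij
    _ ≤ b (f j) := h j
    _ ≤ b i := hb hji

theorem sorting_stability_general {ι G : Type*} [LinearOrder ι] [LocallyFiniteOrderTop ι]
    [AddCommGroup G] [Lattice G] [IsOrderedAddMonoid G] {a b : ι → G}
    (ha : Monotone a) (hb : Monotone b) (σ : Equiv.Perm ι) {δ : G}
    (h : ∀ i, |a i - b (σ i)| ≤ δ) (i : ι) : |a i - b i| ≤ δ := by
  have h_symm (k : ι) : |b k - a (σ.symm k)| ≤ δ := by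
    simpa only [abs_sub_comm, Equiv.apply_symm_apply] using h (σ.symm k)
  have hab : a ≤ fun j ↦ δ + b j :=
    le_of_le_comp_injective ha (hb.const_add δ) σ.injective fun j ↦
      sub_le_iff_le_add.1 ((le_abs_self _).trans (h j))
  have hba : b ≤ fun j ↦ δ + a j :=
    le_of_le_comp_injective hb (ha.const_add δ) σ.symm.injective fun k ↦
      sub_le_iff_le_add.1 ((le_abs_self _).trans (h_symm k))
  rw [abs_le', neg_sub]
  exact ⟨sub_le_iff_le_add.2 (hab i), sub_le_iff_le_add.2 (hba i)⟩

/-- Sorting stability: if two nondecreasing finite sequences can be matched by a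
permutation up to error `δ`, then the identity matching is also within `δ`. -/
theorem sorting_stability (N : ℕ) (a b : Fin N → ℝ)
    (ha : Monotone a) (hb : Monotone b)
    (σ : Equiv.Perm (Fin N)) (δ : ℝ) (hδ : 0 ≤ δ)
    (h : ∀ i, |a i - b (σ i)| ≤ δ) :
    ∀ i, |a i - b i| ≤ δ := by
  exact sorting_stability_general ha hb σ h
end

section
/- arsinh-Lipschitz bound along an eigenvalue branch: let I ⊆ ℝ be an interval, let λ : ℝ → ℝ and λ' : ℝ → ℝ be such that λ has derivative λ'(t) at every t ∈ I, and let L ≥ 0 satisfy |λ'(t)| ≤ L·|λ(t)| for all t ∈ I. Then for all a, b ∈ I one has |arsinh(λ(a)) − arsinh(λ(b))| ≤ L·|a − b|. -/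
/-!
Since `arsinh' x = 1 / √(1 + x²)`, the norm of the derivative of `arsinh ∘ f` is
`‖f'‖ / √(1 + f²)`. The growth condition `‖f'‖ ≤ L √(1 + f²)`, which `‖f'‖ ≤ L |f|` with `L ≥ 0`
implies, bounds it by `L`, and the mean value inequality on a convex set turns this into a Lipschitz
bound.
-/

theorem abs_le_sqrt_one_add_sq (x : ℝ) : |x| ≤ √(1 + x ^ 2) :=
  Real.abs_le_sqrt (le_add_of_nonneg_left zero_le_one)

section NormedSpace

variable {E : Type*} [NormedAddCommGroup E] [NormedSpace ℝ E]

theorem norm_inv_sqrt_one_add_sq_smul_le_iff {v : E} {x L : ℝ} :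
    ‖(√(1 + x ^ 2))⁻¹ • v‖ ≤ L ↔ ‖v‖ ≤ L * √(1 + x ^ 2) := by
  have hpos : 0 < √(1 + x ^ 2) := by positivity
  rw [norm_smul, norm_inv, Real.norm_of_nonneg hpos.le, inv_mul_le_iff₀' hpos]

theorem arsinh_lipschitz_along_branch_general {s : Set E} (hs : Convex ℝ s)
    {f : E → ℝ} {f' : E → E →L[ℝ] ℝ} (hf : ∀ x ∈ s, HasFDerivWithinAt f (f' x) s x)
    {L : ℝ} (hbound : ∀ x ∈ s, ‖f' x‖ ≤ L * √(1 + f x ^ 2))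
    {a b : E} (ha : a ∈ s) (hb : b ∈ s) :
    |Real.arsinh (f a) - Real.arsinh (f b)| ≤ L * ‖a - b‖ :=
  hs.norm_image_sub_le_of_norm_hasFDerivWithin_le (fun x hx ↦ (hf x hx).arsinh)
    (fun x hx ↦ norm_inv_sqrt_one_add_sq_smul_le_iff.2 (hbound x hx)) hb ha

end NormedSpace

/-- `arsinh`-Lipschitz bound along an eigenvalue branch: if `λ` is differentiable on an
interval `I` with `|λ'(t)| ≤ L·|λ(t)|` there, then `arsinh ∘ λ` is `L`-Lipschitz on `I`. -/
theorem arsinh_lipschitz_along_branch (I : Set ℝ) (hI : I.OrdConnected)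
    (lam lam' : ℝ → ℝ)
    (hderiv : ∀ t ∈ I, HasDerivAt lam (lam' t) t)
    (L : ℝ) (hL : 0 ≤ L)
    (hbound : ∀ t ∈ I, |lam' t| ≤ L * |lam t|)
    (a b : ℝ) (ha : a ∈ I) (hb : b ∈ I) :
    |Real.arsinh (lam a) - Real.arsinh (lam b)| ≤ L * |a - b| := by
  have hgrowth : ∀ t ∈ I, |lam' t| ≤ L * √(1 + lam t ^ 2) := fun t ht ↦
    (hbound t ht).trans (mul_le_mul_of_nonneg_left (abs_le_sqrt_one_add_sq _) hL)
  exact arsinh_lipschitz_along_branch_general hI.convex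
    (fun t ht ↦ (hderiv t ht).hasFDerivAt.hasFDerivWithinAt) (by simpa using hgrowth) ha hb
end

section
/- Uniqueness for the symmetrized Sylvester equation: let 𝒜 be a unital C*-algebra, let S, T ∈ 𝒜 be self-adjoint, and let m > 0 satisfy m·1 ≤ S and m·1 ≤ T. If X ∈ 𝒜 satisfies S·X + X·T = 0, then X = 0. Consequently, for each Y ∈ 𝒜 the equation S·X + X·T = Y has at most one solution X ∈ 𝒜. -/
/-!
For all real `a` and `b`,
`(a + b) X = (S X + X T) + (a - S) X + X (b - T)`.
If `m ≤ S` and `a` is at least `m` and `‖S‖`, then `0 ≤ a - S ≤ a - m`, so `a - S` has norm at most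
`a - m`; likewise `b - T` has norm at most `b - n` if `n ≤ T`. Taking norms, `a` and `b` cancel and
leave `(m + n) ‖X‖ ≤ ‖S X + X T‖`.
-/

theorem add_mul_norm_le_norm_mul_add_mul_of_norm_sub_le {R : Type*} [SeminormedRing R]
    [NormedAlgebra ℝ R] {S T : R} {m n a b : ℝ} (hS : ‖a • (1 : R) - S‖ ≤ a - m)
    (hT : ‖b • (1 : R) - T‖ ≤ b - n) (X : R) :
    (m + n) * ‖X‖ ≤ ‖S * X + X * T‖ := by
  have decomposition : (a + b) • X =
      (S * X + X * T) + (a • (1 : R) - S) * X + X * (b • (1 : R) - T) := by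
    simp only [sub_mul, mul_sub, smul_one_mul, mul_smul_one, add_smul]
    abel
  have norm_bound : (a + b) * ‖X‖ ≤ ‖S * X + X * T‖ + (a - m) * ‖X‖ + ‖X‖ * (b - n) :=
    calc (a + b) * ‖X‖ ≤ ‖(a + b) • X‖ := by
          rw [norm_smul]
          gcongr
          exact Real.le_norm_self _
      _ ≤ ‖S * X + X * T‖ + ‖(a • (1 : R) - S) * X‖ + ‖X * (b • (1 : R) - T)‖ := by
          rw [decomposition]
          exact norm_add₃_le
      _ ≤ ‖S * X + X * T‖ + (a - m) * ‖X‖ + ‖X‖ * (b - n) := by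
          gcongr
          · exact norm_mul_le_of_le hS le_rfl
          · exact norm_mul_le_of_le le_rfl hT
  linarith

section CStarAlgebra

variable {𝒜 : Type*} [CStarAlgebra 𝒜] [PartialOrder 𝒜] [StarOrderedRing 𝒜]

theorem norm_smul_one_sub_le_of_smul_one_le {A : 𝒜} {m c : ℝ} (hmA : m • (1 : 𝒜) ≤ A)
    (hmc : m ≤ c) (hAc : ‖A‖ ≤ c) : ‖c • (1 : 𝒜) - A‖ ≤ c - m := by
  simp only [← Algebra.algebraMap_eq_smul_one] at hmA ⊢
  have hA : IsSelfAdjoint A := .of_ge hmA (.algebraMap 𝒜 (.all m))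
  have h_nonneg : 0 ≤ algebraMap ℝ 𝒜 c - A :=
    sub_nonneg.2 (hA.le_algebraMap_norm_self.trans (algebraMap_mono 𝒜 hAc))
  rw [CStarAlgebra.norm_le_iff_le_algebraMap _ (sub_nonneg.2 hmc) h_nonneg, map_sub]
  exact sub_le_sub_left hmA _

theorem add_mul_norm_le_norm_mul_add_mul {S T : 𝒜} {m n : ℝ} (hmS : m • (1 : 𝒜) ≤ S)
    (hnT : n • (1 : 𝒜) ≤ T) (X : 𝒜) : (m + n) * ‖X‖ ≤ ‖S * X + X * T‖ :=
  add_mul_norm_le_norm_mul_add_mul_of_norm_sub_le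
    (norm_smul_one_sub_le_of_smul_one_le hmS (le_max_left m ‖S‖) (le_max_right m ‖S‖))
    (norm_smul_one_sub_le_of_smul_one_le hnT (le_max_left n ‖T‖) (le_max_right n ‖T‖)) X

theorem sylvester_solution_unique_general (S T : 𝒜) (m n : ℝ) (hmn : 0 < m + n)
    (hmS : m • (1 : 𝒜) ≤ S) (hnT : n • (1 : 𝒜) ≤ T) :
    (∀ X : 𝒜, S * X + X * T = 0 → X = 0) ∧
    (∀ Y X₁ X₂ : 𝒜, S * X₁ + X₁ * T = Y → S * X₂ + X₂ * T = Y → X₁ = X₂) := by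
  have kernel_trivial (X : 𝒜) (hX : S * X + X * T = 0) : X = 0 := by
    have h_bound : (m + n) * ‖X‖ ≤ 0 := by
      simpa only [hX, norm_zero] using add_mul_norm_le_norm_mul_add_mul hmS hnT X
    exact norm_le_zero_iff.1 (nonpos_of_mul_nonpos_right h_bound hmn)
  refine ⟨kernel_trivial, fun Y X₁ X₂ h₁ h₂ ↦ sub_eq_zero.1 (kernel_trivial _ ?_)⟩
  rw [mul_sub, sub_mul, sub_add_sub_comm, h₁, h₂, sub_self]

end CStarAlgebra

/-- Uniqueness for the symmetrized Sylvester equation in a unital C*-algebra: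
for self-adjoint `S, T` with `m • 1 ≤ S`, `m • 1 ≤ T`, `m > 0`, the only solution of
`S * X + X * T = 0` is `X = 0`; consequently, for each `Y` the equation
`S * X + X * T = Y` has at most one solution. -/
theorem sylvester_solution_unique {𝒜 : Type*} [CStarAlgebra 𝒜] [PartialOrder 𝒜]
    [StarOrderedRing 𝒜]
    (S T : 𝒜) (hS : IsSelfAdjoint S) (hT : IsSelfAdjoint T)
    (m : ℝ) (hm : 0 < m) (hmS : m • (1 : 𝒜) ≤ S) (hmT : m • (1 : 𝒜) ≤ T) :
    (∀ X : 𝒜, S * X + X * T = 0 → X = 0) ∧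
    (∀ Y X₁ X₂ : 𝒜, S * X₁ + X₁ * T = Y → S * X₂ + X₂ * T = Y → X₁ = X₂) :=
  sylvester_solution_unique_general S T m m (add_pos hm hm) hmS hmT
end

section
/- Norm bound for the symmetrized Sylvester equation: let 𝒜 be a unital C*-algebra, let S, T ∈ 𝒜 be self-adjoint, let m > 0 satisfy m·1 ≤ S and m·1 ≤ T, and let X, Y ∈ 𝒜 satisfy S·X + X·T = Y. Then ‖X‖ ≤ ‖Y‖ / (2m). -/
/-! Choose `c` and `d` so large that `c - S` and `d - T` are positive; since `m ≤ S` and `n ≤ T`,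
their norms are at most `c - m` and `d - n`. The identity
`(c + d) X = (S X + X T) + (c - S) X + X (d - T)` then gives
`(c + d) ‖X‖ ≤ ‖S X + X T‖ + (c - m) ‖X‖ + (d - n) ‖X‖`, from which `c` and `d` cancel. -/

theorem add_mul_norm_le_norm_mul_add_mul_s6 {A : Type*} [SeminormedRing A] [NormedAlgebra ℝ A]
    {S T : A} {c d m n : ℝ} (hS : ‖c • (1 : A) - S‖ ≤ c - m) (hT : ‖d • (1 : A) - T‖ ≤ d - n)
    (X : A) : (m + n) * ‖X‖ ≤ ‖S * X + X * T‖ := by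
  have decomposition :
      (c + d) • X = (S * X + X * T) + (c • 1 - S) * X + X * (d • 1 - T) := by
    simp only [sub_mul, mul_sub, smul_one_mul, mul_smul_one, add_smul]
    abel
  have upper_bound :
      (c + d) * ‖X‖ ≤ ‖S * X + X * T‖ + (c - m) * ‖X‖ + ‖X‖ * (d - n) := calc
    (c + d) * ‖X‖ ≤ ‖(c + d) • X‖ := by
      rw [norm_smul]
      gcongr
      exact Real.le_norm_self _
    _ ≤ ‖S * X + X * T‖ + ‖(c • 1 - S) * X‖ + ‖X * (d • 1 - T)‖ :=
      decomposition ▸ norm_add₃_le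
    _ ≤ ‖S * X + X * T‖ + (c - m) * ‖X‖ + ‖X‖ * (d - n) := by
      gcongr
      · exact norm_mul_le_of_le hS le_rfl
      · exact norm_mul_le_of_le le_rfl hT
  linarith

section CStarAlgebra

variable {A : Type*} [CStarAlgebra A] [PartialOrder A] [StarOrderedRing A]

theorem norm_smul_one_sub_le_sub {S : A} {m c : ℝ} (hmc : m ≤ c) (hmS : m • (1 : A) ≤ S)
    (hSc : S ≤ c • (1 : A)) : ‖c • (1 : A) - S‖ ≤ c - m := by
  rw [CStarAlgebra.norm_le_iff_le_algebraMap _ (sub_nonneg.2 hmc) (sub_nonneg.2 hSc),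
    Algebra.algebraMap_eq_smul_one, sub_smul]
  exact sub_le_sub_left hmS _

theorem exists_norm_smul_one_sub_le_sub {S : A} {m : ℝ} (hmS : m • (1 : A) ≤ S) :
    ∃ c : ℝ, ‖c • (1 : A) - S‖ ≤ c - m := by
  have hS : IsSelfAdjoint S := .of_ge hmS ((IsSelfAdjoint.all m).smul (.one A))
  refine ⟨max m ‖S‖, norm_smul_one_sub_le_sub (le_max_left _ _) hmS ?_⟩
  rw [← Algebra.algebraMap_eq_smul_one]
  exact hS.le_algebraMap_norm_self.trans (algebraMap_mono A (le_max_right _ _))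

theorem sylvester_solution_norm_bound_general {S T X Y : A} {m n : ℝ} (hmn : 0 < m + n)
    (hmS : m • (1 : A) ≤ S) (hnT : n • (1 : A) ≤ T) (hXY : S * X + X * T = Y) :
    ‖X‖ ≤ ‖Y‖ / (m + n) := by
  obtain ⟨c, hc⟩ := exists_norm_smul_one_sub_le_sub hmS
  obtain ⟨d, hd⟩ := exists_norm_smul_one_sub_le_sub hnT
  rw [le_div_iff₀' hmn, ← hXY]
  exact add_mul_norm_le_norm_mul_add_mul_s6 hc hd X

end CStarAlgebra

/-- Norm bound for the symmetrized Sylvester equation in a unital C*-algebra: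
if `S, T` are self-adjoint with `m • 1 ≤ S`, `m • 1 ≤ T`, `m > 0`, and
`S * X + X * T = Y`, then `‖X‖ ≤ ‖Y‖ / (2m)`. -/
theorem sylvester_solution_norm_bound {𝒜 : Type*} [CStarAlgebra 𝒜] [PartialOrder 𝒜]
    [StarOrderedRing 𝒜]
    (S T : 𝒜) (hS : IsSelfAdjoint S) (hT : IsSelfAdjoint T)
    (m : ℝ) (hm : 0 < m) (hmS : m • (1 : 𝒜) ≤ S) (hmT : m • (1 : 𝒜) ≤ T)
    (X Y : 𝒜) (hXY : S * X + X * T = Y) :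
    ‖X‖ ≤ ‖Y‖ / (2 * m) := by
  rw [two_mul]
  exact sylvester_solution_norm_bound_general (add_pos hm hm) hmS hmT hXY
end

section
/- Lipschitz estimate for the operator square root: let 𝒜 be a unital C*-algebra, let a, b ∈ 𝒜 be self-adjoint, and let m > 0 satisfy m·1 ≤ a and m·1 ≤ b. Then ‖√a − √b‖ ≤ ‖a − b‖ / (2√m). -/
/-!
Put `x = √a`, `y = √b` and `d = x - y`, so that `a - b = x * d + d * y`. If `√m ≤ x` and `√n ≤ y`,
then subtracting `x` and `y` from large scalars `M` and `N` leaves elements of norm at most `M - √m`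
and `N - √n`. The identity `(M + N) • d = (M - x) * d + d * (N - y) + (x * d + d * y)` and the
triangle inequality therefore give `(√m + √n) * ‖d‖ ≤ ‖a - b‖`.
-/

lemma sub_norm_add_sub_norm_mul_norm_le {A : Type*} [SeminormedRing A] [NormedAlgebra ℝ A]
    (x y d : A) (M N : ℝ) :
    ((M - ‖M • (1 : A) - x‖) + (N - ‖N • (1 : A) - y‖)) * ‖d‖ ≤ ‖x * d + d * y‖ := by
  have decomposition :
      (M + N) • d = (M • 1 - x) * d + d * (N • 1 - y) + (x * d + d * y) := by
    simp only [add_smul, sub_mul, mul_sub, smul_mul_assoc, mul_smul_comm, one_mul, mul_one]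
    abel
  have triangle : (M + N) * ‖d‖ ≤
      ‖M • (1 : A) - x‖ * ‖d‖ + ‖d‖ * ‖N • (1 : A) - y‖ + ‖x * d + d * y‖ :=
    calc (M + N) * ‖d‖ ≤ ‖(M + N) • d‖ := by
          rw [norm_smul]
          gcongr
          exact Real.le_norm_self _
      _ ≤ ‖(M • 1 - x) * d‖ + ‖d * (N • 1 - y)‖ + ‖x * d + d * y‖ :=
          decomposition ▸ norm_add₃_le
      _ ≤ _ := by gcongr <;> exact norm_mul_le _ _
  linarith

section CStarAlgebra

variable {A : Type*} [CStarAlgebra A] [PartialOrder A] [StarOrderedRing A]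

lemma norm_smul_one_sub_le {x : A} {s M : ℝ} (hsM : s ≤ M) (hs : s • (1 : A) ≤ x)
    (hM : x ≤ M • (1 : A)) : ‖M • (1 : A) - x‖ ≤ M - s := by
  rw [CStarAlgebra.norm_le_iff_le_algebraMap _ (sub_nonneg.2 hsM) (sub_nonneg.2 hM),
    Algebra.algebraMap_eq_smul_one, sub_smul]
  exact sub_le_sub_left hs _

lemma exists_norm_smul_one_sub_le {x : A} {s : ℝ} (hs : s • (1 : A) ≤ x) :
    ∃ M : ℝ, ‖M • (1 : A) - x‖ ≤ M - s := by
  have hx : IsSelfAdjoint x := .of_ge hs (.smul (.all s) (.one A))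
  -- In the zero algebra `‖x‖` itself may be smaller than `s`.
  refine ⟨max s ‖x‖, norm_smul_one_sub_le (le_max_left _ _) hs ?_⟩
  calc x ≤ ‖x‖ • (1 : A) := by
        simpa only [Algebra.algebraMap_eq_smul_one] using hx.le_algebraMap_norm_self
    _ ≤ max s ‖x‖ • (1 : A) := smul_le_smul_of_nonneg_right (le_max_right _ _) zero_le_one

lemma add_mul_norm_le_of_smul_one_le {x y : A} {s t : ℝ} (hx : s • (1 : A) ≤ x)
    (hy : t • (1 : A) ≤ y) (d : A) : (s + t) * ‖d‖ ≤ ‖x * d + d * y‖ := by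
  obtain ⟨M, hM⟩ := exists_norm_smul_one_sub_le hx
  obtain ⟨N, hN⟩ := exists_norm_smul_one_sub_le hy
  calc (s + t) * ‖d‖
      ≤ ((M - ‖M • (1 : A) - x‖) + (N - ‖N • (1 : A) - y‖)) * ‖d‖ := by
        gcongr <;> linarith
    _ ≤ ‖x * d + d * y‖ := sub_norm_add_sub_norm_mul_norm_le x y d M N

lemma sqrt_smul_one_le_sqrt {a : A} {m : ℝ} (hm : 0 ≤ m) (hma : m • (1 : A) ≤ a) :
    Real.sqrt m • (1 : A) ≤ CFC.sqrt a := by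
  have sqrt_scalar : CFC.sqrt (m • (1 : A)) = Real.sqrt m • (1 : A) := by
    refine CFC.sqrt_unique ?_ (smul_nonneg (Real.sqrt_nonneg m) zero_le_one)
    rw [smul_mul_smul_comm, mul_one, Real.mul_self_sqrt hm]
  exact sqrt_scalar ▸ CFC.sqrt_le_sqrt _ _ hma

theorem sqrt_lipschitz_general {a b : A} {m n : ℝ} (hm : 0 ≤ m) (hn : 0 ≤ n)
    (hma : m • (1 : A) ≤ a) (hnb : n • (1 : A) ≤ b) :
    (Real.sqrt m + Real.sqrt n) * ‖CFC.sqrt a - CFC.sqrt b‖ ≤ ‖a - b‖ := by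
  have ha : 0 ≤ a := (smul_nonneg hm zero_le_one).trans hma
  have hb : 0 ≤ b := (smul_nonneg hn zero_le_one).trans hnb
  have factorization : CFC.sqrt a * (CFC.sqrt a - CFC.sqrt b) +
      (CFC.sqrt a - CFC.sqrt b) * CFC.sqrt b = a - b := by
    rw [mul_sub, sub_mul, sub_add_sub_cancel, CFC.sqrt_mul_sqrt_self a, CFC.sqrt_mul_sqrt_self b]
  rw [← factorization]
  exact add_mul_norm_le_of_smul_one_le (sqrt_smul_one_le_sqrt hm hma)
    (sqrt_smul_one_le_sqrt hn hnb) _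

end CStarAlgebra

/-- Lipschitz estimate for the operator square root in a unital C*-algebra:
if `a, b` are self-adjoint with `m • 1 ≤ a`, `m • 1 ≤ b`, `m > 0`, then
`‖√a − √b‖ ≤ ‖a − b‖ / (2√m)`. -/
theorem sqrt_lipschitz {𝒜 : Type*} [CStarAlgebra 𝒜] [PartialOrder 𝒜]
    [StarOrderedRing 𝒜]
    (a b : 𝒜) (ha : IsSelfAdjoint a) (hb : IsSelfAdjoint b)
    (m : ℝ) (hm : 0 < m) (hma : m • (1 : 𝒜) ≤ a) (hmb : m • (1 : 𝒜) ≤ b) :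
    ‖CFC.sqrt a - CFC.sqrt b‖ ≤ ‖a - b‖ / (2 * Real.sqrt m) := by
  rw [le_div_iff₀' (by positivity), two_mul]
  exact sqrt_lipschitz_general hm.le hm.le hma hmb
end

section
/- Lipschitz estimate for the inverse operator square root: let 𝒜 be a unital C*-algebra, let a, b ∈ 𝒜 be self-adjoint, and let m > 0 satisfy m·1 ≤ a and m·1 ≤ b. Then √a and √b are invertible in 𝒜 and ‖(√a)⁻¹ − (√b)⁻¹‖ ≤ ‖a − b‖ / (2·m^{3/2}). -/
/-!
If `s ≤ x`, then `‖R - x‖ ≤ R - s` for every large real `R`. Writing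
`(R + R') d = (R - x) d + d (R' - y) + (x d + d y)`, this shows that the Sylvester operator
`d ↦ x d + d y` is bounded below by `s + t` whenever `s ≤ x` and `t ≤ y`. For `x = √a`, `y = √b`
and `d = x - y` we have `x d + d y = a - b`, which bounds `‖√a - √b‖`; the resolvent identity
`x⁻¹ - y⁻¹ = x⁻¹ (y - x) y⁻¹` then bounds the difference of the inverses.
-/

lemma add_mul_norm_le_norm_mul_add_mul_of_norm_algebraMap_sub_le {A : Type*} [SeminormedRing A]
    [NormedAlgebra ℝ A] {x y : A} {R R' s t : ℝ} (hx : ‖algebraMap ℝ A R - x‖ ≤ R - s)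
    (hy : ‖algebraMap ℝ A R' - y‖ ≤ R' - t) (d : A) :
    (s + t) * ‖d‖ ≤ ‖x * d + d * y‖ := by
  set u := algebraMap ℝ A R - x with hu
  set v := algebraMap ℝ A R' - y with hv
  have split : (R + R') • d = u * d + d * v + (x * d + d * y) := by
    rw [add_smul, Algebra.smul_def R, Algebra.smul_def R', Algebra.commutes R' d, hu, hv, sub_mul,
      mul_sub]
    abel
  have bound : (R + R') * ‖d‖ ≤ (R - s) * ‖d‖ + ‖d‖ * (R' - t) + ‖x * d + d * y‖ :=
    calc (R + R') * ‖d‖ ≤ ‖(R + R') • d‖ := by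
          rw [norm_smul]
          gcongr
          exact le_abs_self _
      _ ≤ ‖u * d‖ + ‖d * v‖ + ‖x * d + d * y‖ := split ▸ norm_add₃_le
      _ ≤ ‖u‖ * ‖d‖ + ‖d‖ * ‖v‖ + ‖x * d + d * y‖ := by gcongr <;> exact norm_mul_le _ _
      _ ≤ (R - s) * ‖d‖ + ‖d‖ * (R' - t) + ‖x * d + d * y‖ := by gcongr
  linarith

section CStarAlgebra

variable {A : Type*} [CStarAlgebra A] [PartialOrder A] [StarOrderedRing A]

lemma exists_norm_algebraMap_sub_le {x : A} {s : ℝ} (hx : algebraMap ℝ A s ≤ x) :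
    ∃ R : ℝ, ‖algebraMap ℝ A R - x‖ ≤ R - s := by
  have hx_sa : IsSelfAdjoint x := .of_ge hx (.algebraMap A (.all s))
  -- In the zero algebra `s ≤ x` does not give `s ≤ ‖x‖`, so `R = ‖x‖` would not do.
  refine ⟨max ‖x‖ s, ?_⟩
  have hxR : x ≤ algebraMap ℝ A (max ‖x‖ s) :=
    hx_sa.le_algebraMap_norm_self.trans (algebraMap_mono A (le_max_left _ _))
  rw [CStarAlgebra.norm_le_iff_le_algebraMap _ (sub_nonneg.2 (le_max_right _ _))
    (sub_nonneg.2 hxR), map_sub]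
  exact sub_le_sub_left hx _

lemma add_mul_norm_le_norm_mul_add_mul_s8 {x y : A} {s t : ℝ} (hx : algebraMap ℝ A s ≤ x)
    (hy : algebraMap ℝ A t ≤ y) (d : A) : (s + t) * ‖d‖ ≤ ‖x * d + d * y‖ := by
  obtain ⟨R, hR⟩ := exists_norm_algebraMap_sub_le hx
  obtain ⟨R', hR'⟩ := exists_norm_algebraMap_sub_le hy
  exact add_mul_norm_le_norm_mul_add_mul_of_norm_algebraMap_sub_le hR hR' d

lemma add_mul_norm_sub_le_norm_mul_self_sub_mul_self {x y : A} {s t : ℝ}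
    (hx : algebraMap ℝ A s ≤ x) (hy : algebraMap ℝ A t ≤ y) :
    (s + t) * ‖x - y‖ ≤ ‖x * x - y * y‖ := by
  have sylvester : x * (x - y) + (x - y) * y = x * x - y * y := by noncomm_ring
  exact sylvester ▸ add_mul_norm_le_norm_mul_add_mul_s8 hx hy (x - y)

lemma norm_ringInverse_le_inv {x : A} {s : ℝ} (hs : 0 < s) (hx : algebraMap ℝ A s ≤ x) :
    ‖Ring.inverse x‖ ≤ s⁻¹ := by
  have hs_pos : IsStrictlyPositive (algebraMap ℝ A s) := isStrictlyPositive_algebraMap hs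
  have hx_pos : IsStrictlyPositive x := hs_pos.of_le hx
  have inverse_s : Ring.inverse (algebraMap ℝ A s) = algebraMap ℝ A s⁻¹ := by
    refine hs_pos.isUnit.mul_left_cancel ?_
    rw [Ring.mul_inverse_cancel _ hs_pos.isUnit, ← map_mul, mul_inv_cancel₀ hs.ne', map_one]
  rw [CStarAlgebra.norm_le_iff_le_algebraMap _ (inv_nonneg.2 hs.le), ← inverse_s]
  exact CStarAlgebra.ringInverse_le_ringInverse hx

lemma norm_ringInverse_sub_ringInverse_le {x y : A} {s t : ℝ} (hs : 0 < s) (ht : 0 < t)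
    (hx : algebraMap ℝ A s ≤ x) (hy : algebraMap ℝ A t ≤ y) :
    ‖Ring.inverse x - Ring.inverse y‖ ≤ ‖x - y‖ / (s * t) := by
  have hxu : IsUnit x := ((isStrictlyPositive_algebraMap hs).of_le hx).isUnit
  have hyu : IsUnit y := ((isStrictlyPositive_algebraMap ht).of_le hy).isUnit
  calc ‖Ring.inverse x - Ring.inverse y‖
      = ‖Ring.inverse x * (y - x) * Ring.inverse y‖ := by
        rw [Ring.inverse_sub_inverse (iff_of_true hxu hyu)]
    _ ≤ ‖Ring.inverse x‖ * ‖y - x‖ * ‖Ring.inverse y‖ := norm_mul₃_le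
    _ ≤ s⁻¹ * ‖y - x‖ * t⁻¹ := by
        gcongr
        · exact norm_ringInverse_le_inv hs hx
        · exact norm_ringInverse_le_inv ht hy
    _ = ‖x - y‖ / (s * t) := by rw [norm_sub_rev]; field_simp

lemma algebraMap_sqrt_le_sqrt {a : A} {m : ℝ} (hm : 0 ≤ m) (ha : algebraMap ℝ A m ≤ a) :
    algebraMap ℝ A √m ≤ CFC.sqrt a := by
  have sqrt_m : CFC.sqrt (algebraMap ℝ A m) = algebraMap ℝ A √m :=
    CFC.sqrt_unique (by rw [← map_mul, Real.mul_self_sqrt hm])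
      (algebraMap_nonneg A (Real.sqrt_nonneg m))
  exact sqrt_m ▸ CFC.sqrt_le_sqrt _ _ ha

lemma add_mul_norm_sqrt_sub_sqrt_le {a b : A} {m n : ℝ} (hm : 0 ≤ m) (hn : 0 ≤ n)
    (ha : algebraMap ℝ A m ≤ a) (hb : algebraMap ℝ A n ≤ b) :
    (√m + √n) * ‖CFC.sqrt a - CFC.sqrt b‖ ≤ ‖a - b‖ := by
  have ha_nonneg : 0 ≤ a := (algebraMap_nonneg A hm).trans ha
  have hb_nonneg : 0 ≤ b := (algebraMap_nonneg A hn).trans hb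
  simpa only [CFC.sqrt_mul_sqrt_self a, CFC.sqrt_mul_sqrt_self b] using
    add_mul_norm_sub_le_norm_mul_self_sub_mul_self (algebraMap_sqrt_le_sqrt hm ha)
      (algebraMap_sqrt_le_sqrt hn hb)

theorem inv_sqrt_lipschitz_general {a b : A} {m n : ℝ} (hm : 0 < m) (hn : 0 < n)
    (ha : m • (1 : A) ≤ a) (hb : n • (1 : A) ≤ b) :
    IsUnit (CFC.sqrt a) ∧ IsUnit (CFC.sqrt b) ∧
    ‖Ring.inverse (CFC.sqrt a) - Ring.inverse (CFC.sqrt b)‖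
      ≤ ‖a - b‖ / (√m * √n * (√m + √n)) := by
  rw [← Algebra.algebraMap_eq_smul_one] at ha hb
  have hm' : 0 < √m := Real.sqrt_pos.2 hm
  have hn' : 0 < √n := Real.sqrt_pos.2 hn
  have hsa : algebraMap ℝ A √m ≤ CFC.sqrt a := algebraMap_sqrt_le_sqrt hm.le ha
  have hsb : algebraMap ℝ A √n ≤ CFC.sqrt b := algebraMap_sqrt_le_sqrt hn.le hb
  refine ⟨((isStrictlyPositive_algebraMap hm').of_le hsa).isUnit,
    ((isStrictlyPositive_algebraMap hn').of_le hsb).isUnit, ?_⟩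
  calc ‖Ring.inverse (CFC.sqrt a) - Ring.inverse (CFC.sqrt b)‖
      ≤ ‖CFC.sqrt a - CFC.sqrt b‖ / (√m * √n) :=
        norm_ringInverse_sub_ringInverse_le hm' hn' hsa hsb
    _ ≤ ‖a - b‖ / (√m + √n) / (√m * √n) := by
        gcongr
        rw [le_div_iff₀' (by positivity)]
        exact add_mul_norm_sqrt_sub_sqrt_le hm.le hn.le ha hb
    _ = ‖a - b‖ / (√m * √n * (√m + √n)) := by rw [div_div, mul_comm (√m + √n)]

end CStarAlgebra

lemma sqrt_mul_sqrt_mul_sqrt_add_sqrt {m : ℝ} (hm : 0 ≤ m) :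
    √m * √m * (√m + √m) = 2 * m ^ ((3 : ℝ) / 2) := by
  have rpow_eq : m ^ ((3 : ℝ) / 2) = √m ^ 3 := by
    rw [Real.rpow_div_two_eq_sqrt _ hm]
    exact_mod_cast Real.rpow_natCast √m 3
  rw [rpow_eq]
  ring

/-- Lipschitz estimate for the inverse operator square root in a unital C*-algebra:
if `a, b` are self-adjoint with `m • 1 ≤ a`, `m • 1 ≤ b`, `m > 0`, then `√a` and `√b`
are invertible and `‖(√a)⁻¹ − (√b)⁻¹‖ ≤ ‖a − b‖ / (2 m^{3/2})`. -/
theorem inv_sqrt_lipschitz {𝒜 : Type*} [CStarAlgebra 𝒜] [PartialOrder 𝒜]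
    [StarOrderedRing 𝒜]
    (a b : 𝒜) (ha : IsSelfAdjoint a) (hb : IsSelfAdjoint b)
    (m : ℝ) (hm : 0 < m) (hma : m • (1 : 𝒜) ≤ a) (hmb : m • (1 : 𝒜) ≤ b) :
    IsUnit (CFC.sqrt a) ∧ IsUnit (CFC.sqrt b) ∧
    ‖Ring.inverse (CFC.sqrt a) - Ring.inverse (CFC.sqrt b)‖
      ≤ ‖a - b‖ / (2 * m ^ ((3 : ℝ) / 2)) := by
  simpa only [sqrt_mul_sqrt_mul_sqrt_add_sqrt hm.le] using
    inv_sqrt_lipschitz_general hm hm hma hmb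
end

section
/- Hellmann–Feynman identity for bounded self-adjoint families: let E be a complex Hilbert space, let H : ℝ → B(E) be a family of bounded self-adjoint operators that has derivative Ḣ ∈ B(E) at t₀, let ψ : ℝ → E have derivative ψ̇ ∈ E at t₀ with ‖ψ(t)‖ = 1 for all t in a neighborhood of t₀, and let μ : ℝ → ℝ be a function with H(t)ψ(t) = μ(t)·ψ(t) for all t in that neighborhood. Then μ is differentiable at t₀ and μ'(t₀) = Re⟪ψ(t₀), Ḣ ψ(t₀)⟫. -/
/-!
Pair the eigenvalue equation at `t` with a left eigenvector `ℓ` of `A t₀` for the eigenvalue `μ t₀`: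
since `ℓ` annihilates the range of `A t₀ - μ t₀`, no increment of `v` enters, and
`ℓ ((A t - A t₀) (v t)) = (μ t - μ t₀) * ℓ (v t)`. Dividing by `t - t₀` and letting `t → t₀`, so
that `v t → v t₀`, gives `μ' = ℓ (A' (v t₀)) / ℓ (v t₀)`. For symmetric `A t₀` the left
eigenvector is `⟪v t₀, ·⟫`.
-/

open scoped InnerProductSpace

open Filter Topology

section LeftEigenvector

variable {𝕜 𝕜' E : Type*} [NontriviallyNormedField 𝕜] [NontriviallyNormedField 𝕜']
  [NormedAlgebra 𝕜 𝕜'] [NormedAddCommGroup E] [NormedSpace 𝕜 E] [NormedSpace 𝕜' E]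
  [IsScalarTower 𝕜 𝕜' E]
  {A : 𝕜 → E →L[𝕜'] E} {A' : E →L[𝕜'] E} {v : 𝕜 → E} {μ : 𝕜 → 𝕜'} {t₀ : 𝕜} {ℓ : E →L[𝕜'] 𝕜'}

lemma slope_eigenvalue_mul_left_eigenvector {t : 𝕜} (heig : A t (v t) = μ t • v t)
    (hℓ : ∀ x, ℓ (A t₀ x) = μ t₀ * ℓ x) :
    slope μ t₀ t * ℓ (v t) = ℓ (slope A t₀ t (v t)) := by
  have hdiff : ℓ ((A t - A t₀) (v t)) = (μ t - μ t₀) * ℓ (v t) := by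
    rw [sub_apply, map_sub, heig, map_smul, hℓ, smul_eq_mul, sub_mul]
  rw [slope_def_module, slope_def_module, smul_apply,
    ContinuousLinearMap.map_smul_of_tower, hdiff, smul_mul_assoc]

theorem hasDerivAt_eigenvalue_of_left_eigenvector (hA : HasDerivAt A A' t₀)
    (hv : ContinuousAt v t₀) (heig : ∀ᶠ t in 𝓝 t₀, A t (v t) = μ t • v t)
    (hℓ : ∀ x, ℓ (A t₀ x) = μ t₀ * ℓ x) (hℓv : ℓ (v t₀) ≠ 0) :
    HasDerivAt μ (ℓ (A' (v t₀)) / ℓ (v t₀)) t₀ := by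
  have hℓv_tendsto : Tendsto (fun t => ℓ (v t)) (𝓝 t₀) (𝓝 (ℓ (v t₀))) :=
    (ℓ.continuous.tendsto _).comp hv
  have happly : Tendsto (fun t => slope A t₀ t (v t)) (𝓝[≠] t₀) (𝓝 (A' (v t₀))) :=
    ((isBoundedBilinearMap_apply (𝕜 := 𝕜') (E := E) (F := E)).continuous.tendsto (A', v t₀)).comp
      (hA.tendsto_slope.prodMk_nhds (hv.mono_left nhdsWithin_le_nhds))
  have hquot : Tendsto (fun t => ℓ (slope A t₀ t (v t)) / ℓ (v t)) (𝓝[≠] t₀)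
      (𝓝 (ℓ (A' (v t₀)) / ℓ (v t₀))) :=
    ((ℓ.continuous.tendsto _).comp happly).div (hℓv_tendsto.mono_left nhdsWithin_le_nhds) hℓv
  refine hasDerivAt_iff_tendsto_slope.2 (hquot.congr' ?_)
  filter_upwards [nhdsWithin_le_nhds heig,
    nhdsWithin_le_nhds (hℓv_tendsto.eventually_ne hℓv)] with t ht hne
  rw [div_eq_iff hne, slope_eigenvalue_mul_left_eigenvector ht hℓ]

end LeftEigenvector

theorem hellmann_feynman_general {𝕜 E : Type*} [RCLike 𝕜] [NormedAddCommGroup E]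
    [InnerProductSpace 𝕜 E] [NormedSpace ℝ E] [IsScalarTower ℝ 𝕜 E]
    {H : ℝ → E →L[𝕜] E} {Hdot : E →L[𝕜] E} {t₀ : ℝ} {ψ : ℝ → E} {μ : ℝ → ℝ}
    (hsymm : (H t₀ : E →ₗ[𝕜] E).IsSymmetric) (hH : HasDerivAt H Hdot t₀)
    (hψ : ContinuousAt ψ t₀) (hψ₀ : ψ t₀ ≠ 0) (heig : ∀ᶠ t in 𝓝 t₀, H t (ψ t) = μ t • ψ t) :
    HasDerivAt μ (RCLike.re ⟪ψ t₀, Hdot (ψ t₀)⟫_𝕜 / ‖ψ t₀‖ ^ 2) t₀ := by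
  have heig_coe : ∀ᶠ t in 𝓝 t₀, H t (ψ t) = (μ t : 𝕜) • ψ t :=
    heig.mono fun t ht => ht.trans (RCLike.real_smul_eq_coe_smul (K := 𝕜) (μ t) (ψ t))
  have hleft (x : E) : innerSL 𝕜 (ψ t₀) (H t₀ x) = μ t₀ * innerSL 𝕜 (ψ t₀) x := by
    calc ⟪ψ t₀, H t₀ x⟫_𝕜 = ⟪H t₀ (ψ t₀), x⟫_𝕜 := (hsymm (ψ t₀) x).symm
      _ = μ t₀ * ⟪ψ t₀, x⟫_𝕜 := by
        rw [heig_coe.self_of_nhds, inner_smul_left, RCLike.conj_ofReal]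
  have hderiv : HasDerivAt (fun t => (μ t : 𝕜)) (⟪ψ t₀, Hdot (ψ t₀)⟫_𝕜 / ⟪ψ t₀, ψ t₀⟫_𝕜) t₀ :=
    hasDerivAt_eigenvalue_of_left_eigenvector hH hψ heig_coe hleft (inner_self_ne_zero.2 hψ₀)
  rw [inner_self_eq_norm_sq_to_K, ← RCLike.ofReal_pow] at hderiv
  simpa only [Function.comp_def, RCLike.reCLM_apply, RCLike.ofReal_re, RCLike.div_re_ofReal] using
    (RCLike.reCLM (K := 𝕜)).hasFDerivAt.comp_hasDerivAt t₀ hderiv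

/-- Hellmann–Feynman identity for bounded self-adjoint families: if `H(t)ψ(t) = μ(t)·ψ(t)`
with `‖ψ(t)‖ = 1` near `t₀`, `H` and `ψ` differentiable at `t₀`, then `μ` is
differentiable at `t₀` with `μ'(t₀) = Re⟪ψ(t₀), Ḣ ψ(t₀)⟫`. -/
theorem hellmann_feynman {E : Type*} [NormedAddCommGroup E]
    [InnerProductSpace ℂ E] [CompleteSpace E]
    (H : ℝ → E →L[ℂ] E) (Hdot : E →L[ℂ] E) (t₀ : ℝ)
    (hsa : ∀ t, ∀ x y : E, ⟪(H t) x, y⟫_ℂ = ⟪x, (H t) y⟫_ℂ)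
    (hH : HasDerivAt H Hdot t₀)
    (ψ : ℝ → E) (ψdot : E) (hψ : HasDerivAt ψ ψdot t₀)
    (hnorm : ∀ᶠ t in nhds t₀, ‖ψ t‖ = 1)
    (μ : ℝ → ℝ) (heig : ∀ᶠ t in nhds t₀, (H t) (ψ t) = μ t • ψ t) :
    HasDerivAt μ ((⟪ψ t₀, Hdot (ψ t₀)⟫_ℂ).re) t₀ := by
  have hψ₀ : ‖ψ t₀‖ = 1 := hnorm.self_of_nhds
  simpa [hψ₀] using hellmann_feynman_general (hsa t₀) hH hψ.continuousAt
    (norm_ne_zero_iff.1 (hψ₀ ▸ one_ne_zero)) heig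
end

section
/- Weighted Hellmann–Feynman identity (abstract Hilbert-space version of Theorem 4.3): let E be a complex Hilbert space, let D ∈ B(E) be self-adjoint, let A : ℝ → B(E) be a family of bounded self-adjoint operators that has derivative Ȧ ∈ B(E) at t₀, let φ : ℝ → E have derivative φ̇ ∈ E at t₀, and let λ : ℝ → ℝ have derivative λ'(t₀) at t₀. Assume that for all t in a neighborhood of t₀ one has D φ(t) = λ(t)·A(t)φ(t) and Re⟪A(t)φ(t), φ(t)⟫ = 1. Then λ'(t₀) = −λ(t₀)·Re⟪Ȧ φ(t₀), φ(t₀)⟫. -/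
open scoped InnerProductSpace

/-!
Pair the eigenvalue equation at `t` with the fixed vector `φ(t₀)`. By symmetry of `D` and `A(t₀)`,
`⟪D φ(t), φ(t₀)⟫ = λ(t₀) ⟪A(t₀) φ(t), φ(t₀)⟫`, so that
`⟪A(t) φ(t), φ(t₀)⟫ (λ(t) - λ(t₀)) = -λ(t₀) ⟪(A(t) - A(t₀)) φ(t), φ(t₀)⟫`. Divide by `t - t₀` and
let `t → t₀`: as `φ` is continuous at `t₀`, the right-hand side tends to
`-λ(t₀) ⟪Ȧ φ(t₀), φ(t₀)⟫`, and hence the difference quotient of `λ` converges. In this argument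
`φ(t₀)` serves only as a left eigenvector of the pencil `D - λ A`.
-/

section LeftEigenvector

variable {𝕜 E F : Type*} [NontriviallyNormedField 𝕜]
  [NormedAddCommGroup E] [NormedSpace 𝕜 E] [NormedAddCommGroup F] [NormedSpace 𝕜 F]

theorem hasDerivAt_of_smul_sub_eventuallyEq {a : 𝕜 → 𝕜} {f g : 𝕜 → F} {g' : F} {t₀ : 𝕜}
    (ha : ContinuousAt a t₀) (ha₀ : a t₀ ≠ 0) (hg : HasDerivAt g g' t₀)
    (h : ∀ᶠ t in nhds t₀, a t • (f t - f t₀) = g t - g t₀) :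
    HasDerivAt f ((a t₀)⁻¹ • g') t₀ := by
  have hslope : ∀ᶠ t in nhds t₀, (a t)⁻¹ • slope g t₀ t = slope f t₀ t := by
    filter_upwards [h, ha.eventually_ne ha₀] with t ht hat
    rw [slope_def_module, slope_def_module, ← ht, smul_comm (t - t₀)⁻¹, inv_smul_smul₀ hat]
  exact hasDerivAt_iff_tendsto_slope.mpr <|
    (((ha.inv₀ ha₀).tendsto.mono_left nhdsWithin_le_nhds).smul hg.tendsto_slope).congr'
      (hslope.filter_mono nhdsWithin_le_nhds)

theorem hasDerivAt_clm_sub_apply {A : 𝕜 → E →L[𝕜] F} {A' : E →L[𝕜] F} {φ : 𝕜 → E} {t₀ : 𝕜}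
    (hA : HasDerivAt A A' t₀) (hφ : ContinuousAt φ t₀) :
    HasDerivAt (fun t => (A t - A t₀) (φ t)) (A' (φ t₀)) t₀ := by
  have hslope (t : 𝕜) : slope A t₀ t (φ t) = slope (fun t => (A t - A t₀) (φ t)) t₀ t := by
    simp [slope_def_module]
  have hlim : Filter.Tendsto (fun t => slope A t₀ t (φ t)) (nhdsWithin t₀ {t₀}ᶜ)
      (nhds (A' (φ t₀))) :=
    (isBoundedBilinearMap_apply.continuous.tendsto (A', φ t₀)).comp
      (hA.tendsto_slope.prodMk_nhds (hφ.tendsto.mono_left nhdsWithin_le_nhds))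
  exact hasDerivAt_iff_tendsto_slope.mpr (hlim.congr hslope)

theorem hasDerivAt_eigenvalue_of_left_eigenvector_s13 {D : E → F} {A : 𝕜 → E →L[𝕜] F}
    {A' : E →L[𝕜] F} {φ : 𝕜 → E} {μ : 𝕜 → 𝕜} {t₀ : 𝕜} (ψ : F →L[𝕜] 𝕜)
    (hA : HasDerivAt A A' t₀) (hφ : ContinuousAt φ t₀)
    (hright : ∀ᶠ t in nhds t₀, D (φ t) = μ t • A t (φ t))
    (hleft : ∀ x, ψ (D x) = μ t₀ * ψ (A t₀ x)) (hψ : ψ (A t₀ (φ t₀)) ≠ 0) :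
    HasDerivAt μ (-μ t₀ * ψ (A' (φ t₀)) / ψ (A t₀ (φ t₀))) t₀ := by
  have hcont : ContinuousAt (fun t => ψ (A t (φ t))) t₀ :=
    ψ.continuous.continuousAt.comp (hA.continuousAt.clm_apply hφ)
  have hderiv : HasDerivAt (fun t => -μ t₀ * ψ ((A t - A t₀) (φ t))) (-μ t₀ * ψ (A' (φ t₀))) t₀ :=
    (ψ.hasFDerivAt.comp_hasDerivAt t₀ (hasDerivAt_clm_sub_apply hA hφ)).const_mul _
  rw [div_eq_inv_mul]
  refine hasDerivAt_of_smul_sub_eventuallyEq hcont hψ hderiv ?_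
  filter_upwards [hright] with t ht
  have hpair : μ t * ψ (A t (φ t)) = μ t₀ * ψ (A t₀ (φ t)) := by
    rw [← hleft, ht, map_smul, smul_eq_mul]
  simp only [smul_eq_mul, sub_self, sub_apply, zero_apply, map_sub, map_zero]
  linear_combination hpair

end LeftEigenvector

theorem weighted_hellmann_feynman_general {𝕜 E : Type*} [RCLike 𝕜] [NormedAddCommGroup E]
    [InnerProductSpace 𝕜 E] [NormedSpace ℝ E] [IsScalarTower ℝ 𝕜 E]
    {D : E →ₗ[𝕜] E} (hD : D.IsSymmetric) {A : ℝ → E →L[𝕜] E} {A' : E →L[𝕜] E} {t₀ : ℝ}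
    (hAsymm : (A t₀ : E →ₗ[𝕜] E).IsSymmetric) (hA : HasDerivAt A A' t₀)
    {φ : ℝ → E} (hφ : ContinuousAt φ t₀) {μ : ℝ → ℝ}
    (heig : ∀ᶠ t in nhds t₀, D (φ t) = μ t • A t (φ t))
    (hne : RCLike.re ⟪A t₀ (φ t₀), φ t₀⟫_𝕜 ≠ 0) :
    HasDerivAt μ
      (-μ t₀ * RCLike.re ⟪A' (φ t₀), φ t₀⟫_𝕜 / RCLike.re ⟪A t₀ (φ t₀), φ t₀⟫_𝕜) t₀ := by
  have hAℝ : HasDerivAt (fun t => (A t).restrictScalars ℝ) (A'.restrictScalars ℝ) t₀ :=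
    (ContinuousLinearMap.restrictScalarsL 𝕜 E E ℝ ℝ).hasFDerivAt.comp_hasDerivAt t₀ hA
  let ψ : E →L[ℝ] ℝ := RCLike.reCLM ∘L (innerSL 𝕜 (φ t₀)).restrictScalars ℝ
  have hψ (x : E) : ψ x = RCLike.re ⟪x, φ t₀⟫_𝕜 := inner_re_symm _ _
  have hleft (x : E) : ψ (D x) = μ t₀ * ψ (A t₀ x) := by
    rw [hψ, hψ, hD, heig.self_of_nhds, ← ContinuousLinearMap.coe_coe (A t₀), hAsymm x,
      RCLike.real_smul_eq_coe_smul (K := 𝕜), inner_smul_right, RCLike.re_ofReal_mul]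
  rw [← hψ, ← hψ]
  exact hasDerivAt_eigenvalue_of_left_eigenvector_s13 ψ hAℝ hφ heig hleft ((hψ _).trans_ne hne)

/-- Weighted Hellmann–Feynman identity (abstract Hilbert-space version of Theorem 4.3):
if `D φ(t) = λ(t)·A(t)φ(t)` with normalization `Re⟪A(t)φ(t), φ(t)⟫ = 1` near `t₀`,
where `D` is bounded self-adjoint, the self-adjoint family `A` has derivative `Ȧ` at
`t₀`, and `φ`, `λ` are differentiable at `t₀`, then
`λ'(t₀) = −λ(t₀)·Re⟪Ȧ φ(t₀), φ(t₀)⟫`. -/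
theorem weighted_hellmann_feynman {E : Type*} [NormedAddCommGroup E]
    [InnerProductSpace ℂ E] [CompleteSpace E]
    (D : E →L[ℂ] E) (hD : ∀ x y : E, ⟪D x, y⟫_ℂ = ⟪x, D y⟫_ℂ)
    (A : ℝ → E →L[ℂ] E) (Adot : E →L[ℂ] E) (t₀ : ℝ)
    (hAsa : ∀ t, ∀ x y : E, ⟪(A t) x, y⟫_ℂ = ⟪x, (A t) y⟫_ℂ)
    (hA : HasDerivAt A Adot t₀)
    (φ : ℝ → E) (φdot : E) (hφ : HasDerivAt φ φdot t₀)
    (lam : ℝ → ℝ) (lam' : ℝ) (hlam : HasDerivAt lam lam' t₀)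
    (heig : ∀ᶠ t in nhds t₀, D (φ t) = lam t • (A t) (φ t))
    (hnormz : ∀ᶠ t in nhds t₀, (⟪(A t) (φ t), φ t⟫_ℂ).re = 1) :
    lam' = -lam t₀ * (⟪Adot (φ t₀), φ t₀⟫_ℂ).re := by
  have hone : RCLike.re ⟪A t₀ (φ t₀), φ t₀⟫_ℂ = 1 := hnormz.self_of_nhds
  simpa [hone] using hlam.unique <| weighted_hellmann_feynman_general (D := (D : E →ₗ[ℂ] E)) hD
    (hAsa t₀) hA hφ.continuousAt heig (hone.trans_ne one_ne_zero)
end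

section
/- Eigenvalue derivative bound for weighted eigenpairs (abstract Hilbert-space version of Corollary 4.4): let E be a complex Hilbert space, let D ∈ B(E) be self-adjoint, let A : ℝ → B(E) be a family of bounded self-adjoint operators that has derivative Ȧ ∈ B(E) at t₀, let φ : ℝ → E have derivative φ̇ ∈ E at t₀, and let λ : ℝ → ℝ have derivative λ'(t₀) at t₀. Assume that for all t in a neighborhood of t₀ one has D φ(t) = λ(t)·A(t)φ(t) and Re⟪A(t)φ(t), φ(t)⟫ = 1, and that for some m > 0 one has m·⟪x, x⟫ ≤ ⟪A(t₀)x, x⟫ for all x ∈ E. Then |λ'(t₀)| ≤ (‖Ȧ‖ / m)·|λ(t₀)|. -/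
/-!
Let `x` and `y` satisfy `D x = a T x` and `D y = b S y` with `a`, `b` real and `D`, `S` symmetric.
Computing `⟪D x, y⟫ = ⟪x, D y⟫` in both ways gives `a ⟪T x, y⟫ = b ⟪S x, y⟫`, that is,
`(a - b) ⟪T x, y⟫ = -b ⟪(T - S) x, y⟫`. Take `x = φ(t)`, `y = φ(t₀)`, divide by `t - t₀` and let
`t → t₀`: this is the weighted Hellmann–Feynman formula `λ'(t₀) ⟪A(t₀) φ, φ⟫ = -λ(t₀) ⟪Ȧ φ, φ⟫` with
`φ = φ(t₀)`. The derivative of `φ` never enters, since `D` is moved across the inner product before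
the limit is taken. Dividing by `‖φ‖²` turns the formula into one between Rayleigh quotients, where
that of `Ȧ` is at most `‖Ȧ‖` in absolute value and that of `A(t₀)` is at least `m`.
-/

open scoped InnerProductSpace

section WeightedEigenpairs

open Filter Topology RCLike

variable {𝕜 E : Type*} [RCLike 𝕜] [NormedAddCommGroup E] [InnerProductSpace 𝕜 E]

theorem le_rayleighQuotient_iff {T : E →L[𝕜] E} {x : E} (hx : x ≠ 0) {m : ℝ} :
    m ≤ T.rayleighQuotient x ↔ m * re ⟪x, x⟫_𝕜 ≤ re ⟪T x, x⟫_𝕜 := by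
  rw [inner_self_eq_norm_sq, le_div_iff₀ (by positivity), T.reApplyInnerSelf_apply]

theorem tendsto_re_inner_clm_apply {F ι : Type*} [SeminormedAddCommGroup F] [NormedSpace 𝕜 F]
    {l : Filter ι} {T : ι → F →L[𝕜] E} {T₀ : F →L[𝕜] E} {x : ι → F} {x₀ : F}
    (hT : Tendsto T l (𝓝 T₀)) (hx : Tendsto x l (𝓝 x₀)) (y : E) :
    Tendsto (fun i ↦ re ⟪T i (x i), y⟫_𝕜) l (𝓝 (re ⟪T₀ x₀, y⟫_𝕜)) :=
  have hTx : Tendsto (fun i ↦ T i (x i)) l (𝓝 (T₀ x₀)) :=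
    (isBoundedBilinearMap_apply.continuous.tendsto (T₀, x₀)).comp (hT.prodMk_nhds hx)
  (continuous_re.tendsto _).comp (hTx.inner tendsto_const_nhds)

variable [NormedSpace ℝ E] [IsScalarTower ℝ 𝕜 E] {D : E →ₗ.[𝕜] E}

theorem weighted_eigenvalue_sub_mul_re_inner (hD : D.IsFormalAdjoint D) {S T : E →ₗ[𝕜] E}
    (hS : S.IsSymmetric) {x y : D.domain} {a b : ℝ} (hx : D x = a • T x) (hy : D y = b • S y) :
    (a - b) * re ⟪T x, (y : E)⟫_𝕜 = -(b * re ⟪T x - S x, (y : E)⟫_𝕜) := by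
  have hpair : a * re ⟪T x, (y : E)⟫_𝕜 = b * re ⟪S x, (y : E)⟫_𝕜 :=
    calc a * re ⟪T x, (y : E)⟫_𝕜 = re ⟪D x, (y : E)⟫_𝕜 := by
          rw [hx, inner_smul_left_eq_smul, smul_re]
      _ = re ⟪(x : E), D y⟫_𝕜 := by rw [hD]
      _ = b * re ⟪S x, (y : E)⟫_𝕜 := by
          rw [hy, inner_smul_right_eq_smul, smul_re, hS]
  rw [inner_sub_left, map_sub]
  linarith

variable {A : ℝ → E →L[𝕜] E} {Adot : E →L[𝕜] E} {t₀ : ℝ} {φ : ℝ → D.domain} {lam : ℝ → ℝ}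

theorem slope_weighted_eigenvalue_mul_re_inner (hD : D.IsFormalAdjoint D)
    (hA₀ : (A t₀ : E →ₗ[𝕜] E).IsSymmetric) {t : ℝ} (ht : D (φ t) = lam t • A t (φ t))
    (ht₀ : D (φ t₀) = lam t₀ • A t₀ (φ t₀)) :
    slope lam t₀ t * re ⟪A t (φ t), (φ t₀ : E)⟫_𝕜 =
      -(lam t₀ * re ⟪slope A t₀ t (φ t), (φ t₀ : E)⟫_𝕜) := by
  have hsub := weighted_eigenvalue_sub_mul_re_inner hD hA₀ (T := A t) ht ht₀
  simp only [ContinuousLinearMap.coe_coe] at hsub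
  simp only [slope_def_module, smul_eq_mul, smul_apply, sub_apply,
    inner_smul_left_eq_smul, smul_re]
  linear_combination (t - t₀)⁻¹ * hsub

/-- Continuity of `φ` is with respect to the norm of `E`, not the graph norm of `D`. -/
theorem hasDerivAt_weighted_eigenvalue (hD : D.IsFormalAdjoint D)
    (hA₀ : (A t₀ : E →ₗ[𝕜] E).IsSymmetric) (hA : HasDerivAt A Adot t₀) (hφ : ContinuousAt φ t₀)
    (heig : ∀ᶠ t in 𝓝 t₀, D (φ t) = lam t • A t (φ t))
    (hne : (A t₀).reApplyInnerSelf (φ t₀) ≠ 0) :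
    HasDerivAt lam
      (-(lam t₀ * Adot.reApplyInnerSelf (φ t₀)) / (A t₀).reApplyInnerSelf (φ t₀)) t₀ := by
  have hφE : Tendsto (fun t ↦ (φ t : E)) (𝓝 t₀) (𝓝 (φ t₀)) := tendsto_subtype_rng.mp hφ
  have hden : Tendsto (fun t ↦ re ⟪A t (φ t), (φ t₀ : E)⟫_𝕜) (𝓝 t₀)
      (𝓝 ((A t₀).reApplyInnerSelf (φ t₀))) :=
    tendsto_re_inner_clm_apply hA.continuousAt hφE _
  have hnum : Tendsto (fun t ↦ re ⟪slope A t₀ t (φ t), (φ t₀ : E)⟫_𝕜) (𝓝[≠] t₀)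
      (𝓝 (Adot.reApplyInnerSelf (φ t₀))) :=
    tendsto_re_inner_clm_apply hA.tendsto_slope (hφE.mono_left nhdsWithin_le_nhds) _
  rw [hasDerivAt_iff_tendsto_slope]
  refine ((hnum.const_mul (lam t₀)).neg.div (hden.mono_left nhdsWithin_le_nhds) hne).congr' ?_
  filter_upwards [nhdsWithin_le_nhds heig, nhdsWithin_le_nhds (hden.eventually_ne hne)]
    with t ht hden_ne
  exact (eq_div_of_mul_eq hden_ne
    (slope_weighted_eigenvalue_mul_re_inner hD hA₀ ht heig.self_of_nhds)).symm

theorem weighted_eigenvalue_derivative_bound_general (hD : D.IsFormalAdjoint D)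
    (hA₀ : (A t₀ : E →ₗ[𝕜] E).IsSymmetric) (hA : HasDerivAt A Adot t₀) (hφ : ContinuousAt φ t₀)
    {lam' : ℝ} (hlam : HasDerivAt lam lam' t₀)
    (heig : ∀ᶠ t in 𝓝 t₀, D (φ t) = lam t • A t (φ t))
    {m : ℝ} (hm : 0 < m) (hcoer : m ≤ (A t₀).rayleighQuotient (φ t₀)) :
    |lam'| ≤ ‖Adot‖ / m * |lam t₀| := by
  have hquot : 0 < (A t₀).rayleighQuotient (φ t₀) := hm.trans_le hcoer
  obtain ⟨hne, hnorm⟩ := div_ne_zero_iff.mp hquot.ne'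
  have hlam' : lam' =
      -(Adot.rayleighQuotient (φ t₀) / (A t₀).rayleighQuotient (φ t₀) * lam t₀) := by
    rw [hlam.unique (hasDerivAt_weighted_eigenvalue hD hA₀ hA hφ heig hne),
      div_div_div_cancel_right₀ hnorm]
    ring
  rw [hlam', abs_neg, abs_mul, abs_div, abs_of_pos hquot]
  gcongr
  exact Adot.rayleighQuotient_le_norm _

end WeightedEigenpairs

/-- Eigenvalue derivative bound for weighted eigenpairs (abstract Hilbert-space version of
Corollary 4.4): under the weighted Hellmann–Feynman hypotheses and the coercivity bound
`m·⟪x, x⟫ ≤ ⟪A(t₀)x, x⟫`, one has `|λ'(t₀)| ≤ (‖Ȧ‖ / m)·|λ(t₀)|`. -/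
theorem weighted_eigenvalue_derivative_bound {E : Type*} [NormedAddCommGroup E]
    [InnerProductSpace ℂ E] [CompleteSpace E]
    (D : E →L[ℂ] E) (hD : ∀ x y : E, ⟪D x, y⟫_ℂ = ⟪x, D y⟫_ℂ)
    (A : ℝ → E →L[ℂ] E) (Adot : E →L[ℂ] E) (t₀ : ℝ)
    (hAsa : ∀ t, ∀ x y : E, ⟪(A t) x, y⟫_ℂ = ⟪x, (A t) y⟫_ℂ)
    (hA : HasDerivAt A Adot t₀)
    (φ : ℝ → E) (φdot : E) (hφ : HasDerivAt φ φdot t₀)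
    (lam : ℝ → ℝ) (lam' : ℝ) (hlam : HasDerivAt lam lam' t₀)
    (heig : ∀ᶠ t in nhds t₀, D (φ t) = lam t • (A t) (φ t))
    (hnormz : ∀ᶠ t in nhds t₀, (⟪(A t) (φ t), φ t⟫_ℂ).re = 1)
    (m : ℝ) (hm : 0 < m)
    (hcoer : ∀ x : E, m * (⟪x, x⟫_ℂ).re ≤ (⟪(A t₀) x, x⟫_ℂ).re) :
    |lam'| ≤ (‖Adot‖ / m) * |lam t₀| := by
  have hφ₀ : φ t₀ ≠ 0 := fun h ↦ by simpa [h] using hnormz.self_of_nhds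
  exact weighted_eigenvalue_derivative_bound_general (D := (D : E →ₗ[ℂ] E).toPMap ⊤)
    (φ := fun t ↦ ⟨φ t, Submodule.mem_top⟩) (fun x y ↦ hD x y) (hAsa t₀) hA
    (hφ.continuousAt.codRestrict _) hlam heig hm ((le_rayleighQuotient_iff hφ₀).2 (hcoer (φ t₀)))
end

section
/- Pinning of the spectral index shift (the k = 0 step in the proof of Theorem 3.5): let u, v : ℤ → ℝ be nondecreasing functions, let m ≥ 1 be a natural number, and assume u(−1) < 0, u(m) > 0, v(0) = 0 and v(m−1) = 0. Let ε > 0 satisfy 2ε ≤ arsinh(−u(−1)) and 2ε ≤ arsinh(u(m)). If k ∈ ℤ is such that |arsinh(u(j)) − arsinh(v(j+k))| < ε for all j ∈ ℤ, then k = 0. -/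
theorem spectral_index_shift_zero_general
    {G : Type*} [AddCommGroup G] [LinearOrder G] [IsOrderedAddMonoid G]
    {a b : ℤ → G} (hb : Monotone b) {ε : G} {p q k : ℤ}
    (hp : a p + ε ≤ b (p + 1)) (hq : b (q - 1) + ε ≤ a q)
    (hkp : |a p - b (p + k)| < ε) (hkq : |a q - b (q + k)| < ε) :
    k = 0 := by
  have shift_upper : p + k < p + 1 :=
    hb.reflect_lt ((sub_lt_iff_lt_add'.mp (abs_sub_lt_iff.mp hkp).2).trans_le hp)
  have shift_lower : q - 1 < q + k :=
    hb.reflect_lt ((le_sub_iff_add_le.mpr hq).trans_lt (sub_lt_of_abs_sub_lt_right hkq))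
  lia

/-- Pinning of the spectral index shift (the `k = 0` step in the proof of Theorem 3.5):
let `u, v : ℤ → ℝ` be nondecreasing with `u (-1) < 0`, `u m > 0`, `v 0 = 0` and
`v (m - 1) = 0` for some natural number `m ≥ 1`, and let `ε > 0` satisfy
`2ε ≤ arsinh (-u (-1))` and `2ε ≤ arsinh (u m)`. If `k : ℤ` satisfies
`|arsinh (u j) − arsinh (v (j + k))| < ε` for all `j`, then `k = 0`. -/
theorem spectral_index_shift_zero (u v : ℤ → ℝ) (hu : Monotone u) (hv : Monotone v)
    (m : ℕ) (hm : 1 ≤ m)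
    (hu_neg : u (-1) < 0) (hu_pos : u (m : ℤ) > 0)
    (hv0 : v 0 = 0) (hvm : v ((m : ℤ) - 1) = 0)
    (ε : ℝ) (hε : 0 < ε)
    (hε1 : 2 * ε ≤ Real.arsinh (-u (-1))) (hε2 : 2 * ε ≤ Real.arsinh (u (m : ℤ)))
    (k : ℤ) (hk : ∀ j : ℤ, |Real.arsinh (u j) - Real.arsinh (v (j + k))| < ε) :
    k = 0 := by
  have left_gap : Real.arsinh (u (-1)) + ε ≤ 0 := by rw [Real.arsinh_neg] at hε1; linarith
  have right_gap : ε ≤ Real.arsinh (u m) := by linarith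
  exact spectral_index_shift_zero_general (a := Real.arsinh ∘ u)
    (Real.arsinh_strictMono.monotone.comp hv) (by simpa [hv0] using left_gap)
    (by simpa [hvm] using right_gap) (hk (-1)) (hk m)
end
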